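/- arXiv:2602.10857 — 2 statements merged into one kernel-verified Lean document; each statement's English description precedes it below -/
import Mathlib

section
/- Fix q ≥ 0 with q ≠ 1. The stationary distribution corresponding to a rate function u in the homogeneous PALRMP is factorised if and only if for all m, n ≥ 1: (i) u(m,n) = (u(1,m)/u(1,n−1))·u(m+1,n−1) + (u(m,1) − u(1,m)) − (u(n,1) − u(1,n)), and (ii) u(m,0) = u(n,0). In that case the one-point function f(n) = ∏_{i=1}^{n} u(1,i−1) works. -/
open scoped Classical

namespace LRMP

/-- A rate function: `u m n` is positive when the departure site is occupied
(`m ≥ 1`) and zero when it is empty (`m = 0`). -/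
def IsRate (u : ℕ → ℕ → ℝ) : Prop :=
  (∀ m n : ℕ, 1 ≤ m → 0 < u m n) ∧ ∀ n : ℕ, u 0 n = 0

/-- The configuration `η^{k,ℓ}`: one particle moved from site `k` to site `ℓ`. -/
def move (L : ℕ) (η : ZMod L → ℕ) (k ℓ : ZMod L) : ZMod L → ℕ :=
  fun a => if a = k then η a - 1 else if a = ℓ then η a + 1 else η a

/-- Every site strictly between `k` and `ℓ`, moving clockwise from `k`, is empty in `η`. -/
def RightClear (L : ℕ) (η : ZMod L → ℕ) (k ℓ : ZMod L) : Prop :=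
  ∀ i : ℕ, 0 < i → i < (ℓ - k).val → η (k + (i : ZMod L)) = 0

/-- Every site strictly between `k` and `ℓ`, moving counterclockwise from `k`, is empty in `η`. -/
def LeftClear (L : ℕ) (η : ZMod L → ℕ) (k ℓ : ZMod L) : Prop :=
  ∀ i : ℕ, 0 < i → i < (k - ℓ).val → η (k - (i : ZMod L)) = 0

/-- The total rate of the transition `η → η^{k,ℓ}` in the PALRMP with rate function `u`,
rate parameters `x` and asymmetry parameter `q`: a clockwise (right) hop contributes
`x ℓ * u (η k) (η ℓ)` and a counterclockwise (left) hop contributes `q * x ℓ * u (η k) (η ℓ)`. -/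
noncomputable def hopRate (L : ℕ) (u : ℕ → ℕ → ℝ) (x : ZMod L → ℝ) (q : ℝ)
    (η : ZMod L → ℕ) (k ℓ : ZMod L) : ℝ :=
  (if k ≠ ℓ ∧ 1 ≤ η k ∧ RightClear L η k ℓ then x ℓ * u (η k) (η ℓ) else 0) +
  (if k ≠ ℓ ∧ 1 ≤ η k ∧ LeftClear L η k ℓ then q * (x ℓ * u (η k) (η ℓ)) else 0)

/-- The incoming probability current into `η`: the sum over pairs `(k, ℓ)` of the
probability current due to the transition into `η` in which a particle moves from
site `k` to site `ℓ` (coming from the configuration `η^{ℓ,k} = move L η ℓ k`). -/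
noncomputable def inflow (L : ℕ) [NeZero L] (u : ℕ → ℕ → ℝ) (x : ZMod L → ℝ) (q : ℝ)
    (π : (ZMod L → ℕ) → ℝ) (η : ZMod L → ℕ) : ℝ :=
  ∑ k : ZMod L, ∑ ℓ : ZMod L,
    if 1 ≤ η ℓ then π (move L η ℓ k) * hopRate L u x q (move L η ℓ k) k ℓ else 0

/-- The outgoing probability current out of `η`. -/
noncomputable def outflow (L : ℕ) [NeZero L] (u : ℕ → ℕ → ℝ) (x : ZMod L → ℝ) (q : ℝ)
    (π : (ZMod L → ℕ) → ℝ) (η : ZMod L → ℕ) : ℝ :=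
  ∑ k : ZMod L, ∑ ℓ : ZMod L, π η * hopRate L u x q η k ℓ

/-- `π` satisfies the master (balance) equation of the PALRMP on `Ω_{L,N}`:
for every configuration `η` with `N` particles, the incoming probability current
equals the outgoing probability current. -/
def IsStationary (L : ℕ) [NeZero L] (N : ℕ) (u : ℕ → ℕ → ℝ) (x : ZMod L → ℝ) (q : ℝ)
    (π : (ZMod L → ℕ) → ℝ) : Prop :=
  ∀ η : ZMod L → ℕ, (∑ a, η a) = N → inflow L u x q π η = outflow L u x q π η

/-- The stationary distribution corresponding to the rate `u` in the PALRMP with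
asymmetry parameter `q` is factorised, with one-point function `f`: for every
`L ≥ 2`, `N ≥ 1` and all positive rate parameters `x`, the factorised distribution
`η ↦ ∏_ℓ f (x ℓ) (η ℓ)` (up to normalisation) is stationary. -/
def FactorisedPALRMP (u : ℕ → ℕ → ℝ) (q : ℝ) (f : ℝ → ℕ → ℝ) : Prop :=
  (∀ (x : ℝ) (n : ℕ), 0 < x → 0 < f x n) ∧
  ∀ (L N : ℕ) [NeZero L], 2 ≤ L → 1 ≤ N →
    ∀ x : ZMod L → ℝ, (∀ ℓ, 0 < x ℓ) →
      IsStationary L N u x q (fun η => ∏ ℓ, f (x ℓ) (η ℓ))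

/-- The stationary distribution corresponding to the rate `u` in the homogeneous
PALRMP (all rate parameters equal to `1`) with asymmetry parameter `q` is factorised,
with one-point function `f`. -/
def FactorisedHomog (u : ℕ → ℕ → ℝ) (q : ℝ) (f : ℕ → ℝ) : Prop :=
  (∀ n : ℕ, 0 < f n) ∧
  ∀ (L N : ℕ) [NeZero L], 2 ≤ L → 1 ≤ N →
    IsStationary L N u (fun _ => (1 : ℝ)) q (fun η => ∏ ℓ, f (η ℓ))

end LRMP

namespace LRMP

/-- Net outgoing current across an ordered pair of neighbouring sites, per unit of weight. -/
noncomputable def netA (u : ℕ → ℕ → ℝ) (f : ℕ → ℝ) (m n : ℕ) : ℝ :=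
  (if 1 ≤ m then u m n else 0) -
    (if 1 ≤ n then f (m + 1) * f (n - 1) / (f m * f n) * u (m + 1) (n - 1) else 0)

lemma clear_swap (L : ℕ) [NeZero L] (η : ZMod L → ℕ) (k ℓ : ZMod L) :
    LeftClear L η k ℓ ↔ RightClear L η ℓ k := by
  have key : ∀ i : ℕ, i ≤ (k - ℓ).val →
      k - (i : ZMod L) = ℓ + (((k - ℓ).val - i : ℕ) : ZMod L) := by
    intro i hi
    rw [Nat.cast_sub hi, ZMod.natCast_zmod_val]; ring
  constructor
  · intro h i h0 h1
    have := h ((k - ℓ).val - i) (by omega) (by omega)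
    rw [key _ (by omega)] at this
    rwa [show (k - ℓ).val - ((k - ℓ).val - i) = i by omega] at this
  · intro h i h0 h1
    rw [key i h1.le]
    exact h _ (by omega) (by omega)

lemma clear_move (L : ℕ) [NeZero L] (η : ZMod L → ℕ) (k ℓ : ZMod L) (h : k ≠ ℓ) (a b : ZMod L)
    (hab : (a = k ∧ b = ℓ) ∨ (a = ℓ ∧ b = k)) :
    RightClear L (move L η ℓ k) a b ↔ RightClear L η a b := by
  have key : ∀ i : ℕ, 0 < i → i < (b - a).val →
      move L η ℓ k (a + (i : ZMod L)) = η (a + (i : ZMod L)) := by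
    intro i h0 h1
    have hL : (b - a).val < L := ZMod.val_lt _
    have e : ((i : ZMod L)).val = i := ZMod.val_cast_of_lt (by omega)
    have n1 : a + (i : ZMod L) ≠ a := by
      intro hh
      have : (i : ZMod L) = 0 := by simpa using hh
      rw [this] at e; simp at e; omega
    have n2 : a + (i : ZMod L) ≠ b := by
      intro hh
      have : (i : ZMod L) = b - a := by rw [← hh]; ring
      rw [this] at e; omega
    unfold move
    rcases hab with ⟨rfl, rfl⟩ | ⟨rfl, rfl⟩ <;> simp [n1, n2]
  unfold RightClear
  constructor <;> intro H i h0 h1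
  · rw [← key i h0 h1]; exact H i h0 h1
  · rw [key i h0 h1]; exact H i h0 h1

lemma prod_move (L : ℕ) [NeZero L] (f : ℕ → ℝ) (hf : ∀ n, 0 < f n) (η : ZMod L → ℕ)
    (k ℓ : ZMod L) (h : k ≠ ℓ) :
    ∏ a, f (move L η ℓ k a) =
      (∏ a, f (η a)) * (f (η k + 1) * f (η ℓ - 1) / (f (η k) * f (η ℓ))) := by
  have e : ∀ g : ZMod L → ℝ, ∏ a, g a = g k * (g ℓ * ∏ a ∈ (Finset.univ.erase k).erase ℓ, g a) := by
    intro g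
    rw [Finset.mul_prod_erase _ _ (by simp [h.symm]), Finset.mul_prod_erase _ _ (by simp)]
  rw [e, e (fun a => f (η a))]
  have : ∏ a ∈ (Finset.univ.erase k).erase ℓ, f (move L η ℓ k a)
      = ∏ a ∈ (Finset.univ.erase k).erase ℓ, f (η a) := by
    apply Finset.prod_congr rfl
    intro a ha
    simp only [Finset.mem_erase] at ha
    simp [move, ha.1, ha.2.1]
  rw [this]
  have h1 := (hf (η k)).ne'
  have h2 := (hf (η ℓ)).ne'
  simp only [move, h, if_true, if_false]
  field_simp

lemma flow_eq (L : ℕ) [NeZero L] (u : ℕ → ℕ → ℝ) (q : ℝ) (f : ℕ → ℝ) (hf : ∀ n, 0 < f n)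
    (η : ZMod L → ℕ) :
    outflow L u (fun _ => (1 : ℝ)) q (fun η => ∏ ℓ, f (η ℓ)) η
      - inflow L u (fun _ => (1 : ℝ)) q (fun η => ∏ ℓ, f (η ℓ)) η
    = (∏ ℓ, f (η ℓ)) * ((∑ k, ∑ ℓ, if k ≠ ℓ ∧ RightClear L η k ℓ then netA u f (η k) (η ℓ) else 0)
      + q * ∑ k, ∑ ℓ, if k ≠ ℓ ∧ RightClear L η ℓ k then netA u f (η k) (η ℓ) else 0) := by
  unfold outflow inflow
  simp only [Finset.mul_sum, mul_add, ← Finset.sum_add_distrib, ← Finset.sum_sub_distrib]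
  apply Finset.sum_congr rfl; intro k _
  apply Finset.sum_congr rfl; intro ℓ _
  by_cases h : k = ℓ
  · subst h; simp [hopRate]
  · rw [prod_move L f hf η k ℓ h]
    unfold hopRate
    rw [clear_swap, clear_swap, clear_move L η k ℓ h k ℓ (by simp),
      clear_move L η k ℓ h ℓ k (by simp)]
    have e1 : move L η ℓ k k = η k + 1 := by simp [move, h]
    have e2 : move L η ℓ k ℓ = η ℓ - 1 := by simp [move]
    rw [e1, e2]
    unfold netA
    by_cases a1 : RightClear L η k ℓ <;> by_cases a2 : RightClear L η ℓ k <;>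
      by_cases a3 : 1 ≤ η k <;> by_cases a4 : 1 ≤ η ℓ <;>
      simp only [a1, a2, a3, a4, h, ne_eq, not_false_eq_true, and_true, and_false, if_true,
        if_false, le_add_iff_nonneg_left, zero_le] <;> ring

lemma flow_iff (L : ℕ) [NeZero L] (u : ℕ → ℕ → ℝ) (q : ℝ) (f : ℕ → ℝ) (hf : ∀ n, 0 < f n)
    (η : ZMod L → ℕ) :
    inflow L u (fun _ => (1 : ℝ)) q (fun η => ∏ ℓ, f (η ℓ)) η
      = outflow L u (fun _ => (1 : ℝ)) q (fun η => ∏ ℓ, f (η ℓ)) η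
    ↔ ((∑ k, ∑ ℓ, if k ≠ ℓ ∧ RightClear L η k ℓ then netA u f (η k) (η ℓ) else 0)
      + q * ∑ k, ∑ ℓ, if k ≠ ℓ ∧ RightClear L η ℓ k then netA u f (η k) (η ℓ) else 0) = 0 := by
  have h := flow_eq L u q f hf η
  have hp : (∏ ℓ, f (η ℓ)) ≠ 0 := (Finset.prod_pos (fun i _ => hf _)).ne'
  constructor
  · intro e
    rw [e, sub_self] at h
    exact (mul_eq_zero.mp h.symm).resolve_left hp
  · intro e
    rw [e, mul_zero] at h
    linarith

lemma count_next (L : ℕ) [NeZero L] (η : ZMod L → ℕ) (k : ZMod L) :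
    (∑ ℓ, if (k ≠ ℓ ∧ RightClear L η k ℓ) ∧ 1 ≤ η ℓ then (1 : ℝ) else 0)
      = if ∃ ℓ, ℓ ≠ k ∧ 1 ≤ η ℓ then 1 else 0 := by
  split_ifs with hex
  · have hex' : ∃ i : ℕ, 0 < i ∧ 1 ≤ η (k + (i : ZMod L)) := by
      obtain ⟨ℓ, h1, h2⟩ := hex
      refine ⟨(ℓ - k).val, ?_, ?_⟩
      · rw [Nat.pos_iff_ne_zero, ne_eq, ZMod.val_eq_zero, sub_eq_zero]; exact h1
      · rw [ZMod.natCast_zmod_val]; simpa using h2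
    have hlt : Nat.find hex' < L := by
      obtain ⟨ℓ, h1, h2⟩ := hex
      refine lt_of_le_of_lt (Nat.find_min' hex' (m := (ℓ - k).val) ⟨?_, ?_⟩) (ZMod.val_lt _)
      · rw [Nat.pos_iff_ne_zero, ne_eq, ZMod.val_eq_zero, sub_eq_zero]; exact h1
      · rw [ZMod.natCast_zmod_val]; simpa using h2
    obtain ⟨hi0, hi1⟩ := Nat.find_spec hex'
    have hmin : ∀ j, j < Nat.find hex' → ¬ (0 < j ∧ 1 ≤ η (k + (j : ZMod L))) :=
      fun j hj => Nat.find_min hex' hj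
    generalize Nat.find hex' = i at *
    have hv : ((i : ZMod L)).val = i := ZMod.val_cast_of_lt hlt
    rw [Finset.sum_eq_single (k + (i : ZMod L))]
    · rw [if_pos]
      refine ⟨⟨?_, ?_⟩, hi1⟩
      · intro hh
        have : (i : ZMod L) = 0 := by simpa using hh
        rw [this] at hv; simp at hv; omega
      · intro j h0 h1
        rw [add_sub_cancel_left, hv] at h1
        have := hmin j h1
        by_contra hne
        exact this ⟨h0, by omega⟩
    · intro ℓ _ hne
      rw [if_neg]
      rintro ⟨⟨h1, h2⟩, h3⟩
      have hℓ : k + (((ℓ - k).val : ℕ) : ZMod L) = ℓ := by rw [ZMod.natCast_zmod_val]; ring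
      have hpos : 0 < (ℓ - k).val := by
        rw [Nat.pos_iff_ne_zero, ne_eq, ZMod.val_eq_zero, sub_eq_zero]; exact Ne.symm h1
      rcases lt_trichotomy i (ℓ - k).val with h | h | h
      · have := h2 i hi0 h; omega
      · apply hne; rw [h, hℓ]
      · apply hmin _ h; rw [hℓ]; exact ⟨hpos, h3⟩
    · simp
  · apply Finset.sum_eq_zero
    intro ℓ _
    rw [if_neg]
    rintro ⟨⟨h1, _⟩, h3⟩
    exact hex ⟨ℓ, Ne.symm h1, h3⟩

lemma clear_neg (L : ℕ) [NeZero L] (η : ZMod L → ℕ) (k ℓ : ZMod L) :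
    RightClear L (fun a => η (-a)) (-k) (-ℓ) ↔ RightClear L η ℓ k := by
  rw [← clear_swap L η k ℓ]
  unfold RightClear LeftClear
  rw [show -ℓ - -k = k - ℓ by ring]
  have : ∀ i : ℕ, -(-k + (i : ZMod L)) = k - (i : ZMod L) := fun i => by ring
  simp only [this]

lemma count_prev (L : ℕ) [NeZero L] (η : ZMod L → ℕ) (k : ZMod L) :
    (∑ ℓ, if (k ≠ ℓ ∧ RightClear L η ℓ k) ∧ 1 ≤ η ℓ then (1 : ℝ) else 0)
      = if ∃ ℓ, ℓ ≠ k ∧ 1 ≤ η ℓ then 1 else 0 := by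
  have h := count_next L (fun a => η (-a)) (-k)
  rw [← Equiv.sum_comp (Equiv.neg (ZMod L))] at h
  simp only [Equiv.neg_apply, clear_neg, neg_neg, ne_eq, neg_inj] at h
  simp only [ne_eq]
  rw [h]
  have : (∃ ℓ, ¬ ℓ = -k ∧ 1 ≤ η (-ℓ)) ↔ (∃ ℓ, ¬ ℓ = k ∧ 1 ≤ η ℓ) := by
    constructor
    · rintro ⟨ℓ, h1, h2⟩
      exact ⟨-ℓ, fun e => h1 (by rw [← e, neg_neg]), h2⟩
    · rintro ⟨ℓ, h1, h2⟩
      exact ⟨-ℓ, fun e => h1 (neg_inj.mp e), by simpa using h2⟩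
  simp only [this]

lemma tele (L : ℕ) [NeZero L] (η : ZMod L → ℕ) (h : ℕ → ℝ) (A : ℕ → ℕ → ℝ)
    (hA : ∀ m n, A m n = (if 1 ≤ n then h m else 0) - (if 1 ≤ m then h n else 0)) :
    (∑ k, ∑ ℓ, if k ≠ ℓ ∧ RightClear L η k ℓ then A (η k) (η ℓ) else 0) = 0 := by
  have e : ∀ k ℓ : ZMod L, (if k ≠ ℓ ∧ RightClear L η k ℓ then A (η k) (η ℓ) else 0)
      = h (η k) * (if (k ≠ ℓ ∧ RightClear L η k ℓ) ∧ 1 ≤ η ℓ then (1 : ℝ) else 0)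
       - h (η ℓ) * (if (ℓ ≠ k ∧ RightClear L η k ℓ) ∧ 1 ≤ η k then (1 : ℝ) else 0) := by
    intro k ℓ
    rw [hA]
    by_cases a0 : k = ℓ
    · simp [a0]
    · have a0' : ¬ ℓ = k := fun e => a0 e.symm
      by_cases a1 : RightClear L η k ℓ <;> simp [a0, a0', a1]
  simp only [e, Finset.sum_sub_distrib]
  rw [Finset.sum_comm (f := fun k ℓ => h (η ℓ) * _)]
  simp only [← Finset.mul_sum, count_next, count_prev, sub_self]

lemma suff (q : ℝ) (u : ℕ → ℕ → ℝ) (hu : IsRate u)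
    (h1 : ∀ m n : ℕ, 1 ≤ m → 1 ≤ n →
        u m n = u 1 m / u 1 (n - 1) * u (m + 1) (n - 1)
          + (u m 1 - u 1 m) - (u n 1 - u 1 n))
    (h2 : ∀ m n : ℕ, 1 ≤ m → 1 ≤ n → u m 0 = u n 0) :
    FactorisedHomog u q (fun n => ∏ i ∈ Finset.range n, u 1 i) := by
  have hf : ∀ n, 0 < (fun n => ∏ i ∈ Finset.range n, u 1 i) n :=
    fun n => Finset.prod_pos fun i _ => hu.1 1 i le_rfl
  have hA : ∀ m n, netA u (fun n => ∏ i ∈ Finset.range n, u 1 i) m n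
      = (if 1 ≤ n then u m 1 - u 1 m else 0) - (if 1 ≤ m then u n 1 - u 1 n else 0) := by
    intro m n
    have hw : ∀ m n : ℕ, 1 ≤ n → (∏ i ∈ Finset.range (m+1), u 1 i) *
        (∏ i ∈ Finset.range (n-1), u 1 i) / ((∏ i ∈ Finset.range m, u 1 i) *
        (∏ i ∈ Finset.range n, u 1 i)) = u 1 m / u 1 (n - 1) := by
      intro m n hn
      obtain ⟨n, rfl⟩ : ∃ j, n = j + 1 := ⟨n - 1, by omega⟩
      rw [Finset.prod_range_succ _ m, Nat.add_sub_cancel, Finset.prod_range_succ _ n]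
      have a1 := (hf m).ne'
      have a2 := (hf n).ne'
      have a3 := (hu.1 1 n le_rfl).ne'
      simp only at a1 a2
      field_simp
    unfold netA
    by_cases hm : 1 ≤ m <;> by_cases hn : 1 ≤ n
    · simp only [hm, hn, if_true]
      rw [hw m n hn]
      linarith [h1 m n hm hn]
    · obtain rfl : n = 0 := by omega
      simp [hm, hu.2]
      exact h2 m 1 hm le_rfl
    · obtain rfl : m = 0 := by omega
      simp only [hn, hm, if_true, if_false]
      rw [hw 0 n hn, hu.2]
      have := (hu.1 1 (n-1) le_rfl).ne'
      simp only [zero_add]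
      field_simp
      ring
    · simp [hm, hn]
  refine ⟨hf, ?_⟩
  intro L N _ _ _ η _
  rw [flow_iff L u q _ hf]
  rw [tele L η (fun m => u m 1 - u 1 m) _ hA]
  have := tele L η (fun m => u m 1 - u 1 m) _ hA
  rw [Finset.sum_comm] at this ⊢
  have hneg : ∀ a b, netA u (fun n => ∏ i ∈ Finset.range n, u 1 i) a b
      = - netA u (fun n => ∏ i ∈ Finset.range n, u 1 i) b a := by
    intro a b; rw [hA, hA]; ring
  have : (∑ k, ∑ ℓ, if ℓ ≠ k ∧ RightClear L η k ℓ then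
      netA u (fun n => ∏ i ∈ Finset.range n, u 1 i) (η ℓ) (η k) else 0) = 0 := by
    apply tele L η (fun m => -(u m 1 - u 1 m)) (fun a b => netA u (fun n => ∏ i ∈ Finset.range n, u 1 i) b a) _ |> Eq.trans _
    · simp only [ne_comm]
    · intro m n; rw [hneg, hA]; split_ifs <;> ring
  rw [this]; ring

lemma nec (q : ℝ) (hq : 0 ≤ q) (hq1 : q ≠ 1) (u : ℕ → ℕ → ℝ) (hu : IsRate u) (f : ℕ → ℝ)
    (H : FactorisedHomog u q f) :
    ((∀ m n : ℕ, 1 ≤ m → 1 ≤ n →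
          u m n = u 1 m / u 1 (n - 1) * u (m + 1) (n - 1)
            + (u m 1 - u 1 m) - (u n 1 - u 1 n)) ∧
        ∀ m n : ℕ, 1 ≤ m → 1 ≤ n → u m 0 = u n 0) := by
  obtain ⟨hf, H⟩ := H
  have rc2 : ∀ (η : ZMod 2 → ℕ) (k ℓ : ZMod 2), RightClear 2 η k ℓ := by
    intro η k ℓ i h0 h1
    have := ZMod.val_lt (ℓ - k); omega
  have rc3 : ∀ (η : ZMod 3 → ℕ) (k ℓ : ZMod 3),
      RightClear 3 η k ℓ ↔ (ℓ = k + 2 → η (k + 1) = 0) := by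
    intro η k ℓ
    constructor
    · rintro h rfl
      have := h 1 (by norm_num) (by rw [add_sub_cancel_left]; decide)
      simpa using this
    · intro h i h0 h1
      have := ZMod.val_lt (ℓ - k)
      have hi : i = 1 := by omega
      have hv : (ℓ - k).val = 2 := by omega
      subst hi
      rw [Nat.cast_one]
      apply h
      have : ℓ - k = ((2 : ℕ) : ZMod 3) := by rw [← hv, ZMod.natCast_zmod_val]
      rw [show ℓ = k + (ℓ - k) by ring, this]; rfl
  have anti : ∀ m n, netA u f m n = - netA u f n m := by
    intro m n
    by_cases h0 : m + n = 0
    · obtain ⟨rfl, rfl⟩ : m = 0 ∧ n = 0 := by omega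
      simp [netA]
    obtain ⟨η, x0, x1⟩ : ∃ η : ZMod 2 → ℕ, η 0 = m ∧ η 1 = n := ⟨![m, n], rfl, rfl⟩
    have h := H 2 (m + n) le_rfl (by omega) η (by
      rw [← x0, ← x1]; exact Fin.sum_univ_two η)
    replace h := (flow_iff 2 u q f hf η).mp h
    simp only [rc2, and_true] at h
    have h' : (netA u f m n + netA u f n m) * (1 + q) = 0 := by
      have e : ∀ F : ZMod 2 → ℝ, ∑ k, F k = F 0 + F 1 := fun F => Fin.sum_univ_two F
      simp only [e] at h
      have d1 : (0 : ZMod 2) ≠ 1 := by decide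
      simp only [ne_eq, x0, x1, d1, d1.symm, not_true, not_false_eq_true, if_true, if_false] at h
      linarith
    have : (1 + q) ≠ 0 := by positivity
    have := (mul_eq_zero.mp h').resolve_right this
    linarith
  have tri : ∀ a b c : ℕ, 1 ≤ a → 1 ≤ b →
      netA u f a b + netA u f b c + netA u f c a + (if c = 0 then netA u f b a else 0) = 0 := by
    intro a b c ha hb
    obtain ⟨η, x0, x1, x2⟩ : ∃ η : ZMod 3 → ℕ, η 0 = a ∧ η 1 = b ∧ η 2 = c :=
      ⟨![a, b, c], rfl, rfl, rfl⟩
    have h := H 3 (a + b + c) (by norm_num) (by omega) η (by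
      rw [← x0, ← x1, ← x2]; exact Fin.sum_univ_three η)
    replace h := (flow_iff 3 u q f hf η).mp h
    have e : ∀ F : ZMod 3 → ℝ, ∑ k, F k = F 0 + F 1 + F 2 := fun F => Fin.sum_univ_three F
    have d1 : (0 : ZMod 3) ≠ 1 := by decide
    have d2 : (0 : ZMod 3) ≠ 2 := by decide
    have d3 : (1 : ZMod 3) ≠ 2 := by decide
    have s1 : (1 : ZMod 3) + 2 = 0 := by decide
    have s2 : (2 : ZMod 3) + 2 = 1 := by decide
    have s3 : (2 : ZMod 3) + 1 = 0 := by decide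
    have s4 : (1 : ZMod 3) + 1 = 2 := by decide
    have ha0 : a ≠ 0 := by omega
    have hb0 : b ≠ 0 := by omega
    simp only [e, rc3, zero_add, s1, s2, s3, s4, ne_eq, x0, x1, x2, d1, d1.symm, d2, d2.symm,
      d3, d3.symm, ha0, hb0, not_true, not_false_eq_true, if_true, if_false, true_and, false_and,
      false_imp_iff, true_imp_iff] at h
    rw [anti b a, anti a c, anti c b] at h
    rw [anti b a]
    have hq' : (1 - q) ≠ 0 := sub_ne_zero.mpr (Ne.symm hq1)
    refine (mul_eq_zero_iff_left hq').mp ?_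
    split_ifs at h ⊢ <;> linarith
  have A0 : ∀ m, 1 ≤ m → netA u f m 0 = u m 0 := by
    intro m hm; simp [netA, hm]
  have hii : ∀ m n : ℕ, 1 ≤ m → 1 ≤ n → u m 0 = u n 0 := by
    intro m n hm hn
    have := tri m n 0 hm hn
    rw [anti n m, anti 0 m, A0 m hm, A0 n hn] at this
    simp at this; linarith
  have hr : ∀ n, f (n + 1) / f n = u 1 n * (f 1 / (f 0 * u 1 0)) := by
    intro n
    have a1 : netA u f 0 (n + 1) = - u 1 0 := by
      rw [anti, A0 _ (by omega), hii (n+1) 1 (by omega) le_rfl]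
    simp [netA] at a1
    have b0 := (hf 0).ne'
    have b1 := (hf n).ne'
    have b2 := (hf (n+1)).ne'
    have b3 := (hu.1 1 0 le_rfl).ne'
    field_simp at a1 ⊢
    linarith
  have hA : ∀ m n, 1 ≤ m → 1 ≤ n →
      netA u f m n = u m n - u 1 m / u 1 (n - 1) * u (m + 1) (n - 1) := by
    intro m n hm hn
    obtain ⟨n, rfl⟩ : ∃ j, n = j + 1 := ⟨n - 1, by omega⟩
    simp only [netA, hm, hn, if_true, Nat.add_sub_cancel]
    have : f (m + 1) * f n / (f m * f (n + 1)) = (f (m + 1) / f m) / (f (n + 1) / f n) := by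
      have b0 := (hf m).ne'
      have b1 := (hf n).ne'
      have b2 := (hf (n+1)).ne'
      field_simp
    rw [this, hr, hr, mul_div_mul_right]
    have := hf 0
    have := hf 1
    have := hu.1 1 0 le_rfl
    positivity
  refine ⟨?_, hii⟩
  intro m n hm hn
  have t := tri m n 1 hm hn
  have A1 : ∀ m, 1 ≤ m → netA u f m 1 = u m 1 - u 1 m := by
    intro m hm
    rw [hA m 1 hm le_rfl, Nat.sub_self, hii (m+1) 1 (by omega) le_rfl]
    have := (hu.1 1 0 le_rfl).ne'
    field_simp
  rw [anti 1 m, A1 m hm, A1 n hn, hA m n hm hn] at t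
  simp at t
  linarith

/-- for `q ≠ 1`, the stationary distribution corresponding to `u` in the
homogeneous PALRMP is factorised iff conditions (i) and (ii) hold; in that case the
one-point function `f n = ∏_{i=1}^{n} u (1, i-1)` works. -/
theorem hpalrmp_factorised_iff
    (q : ℝ) (hq : 0 ≤ q) (hq1 : q ≠ 1)
    (u : ℕ → ℕ → ℝ) (hu : IsRate u) :
    ((∃ f : ℕ → ℝ, FactorisedHomog u q f) ↔
      ((∀ m n : ℕ, 1 ≤ m → 1 ≤ n →
          u m n = u 1 m / u 1 (n - 1) * u (m + 1) (n - 1)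
            + (u m 1 - u 1 m) - (u n 1 - u 1 n)) ∧
        ∀ m n : ℕ, 1 ≤ m → 1 ≤ n → u m 0 = u n 0)) ∧
    ((∀ m n : ℕ, 1 ≤ m → 1 ≤ n →
        u m n = u 1 m / u 1 (n - 1) * u (m + 1) (n - 1)
          + (u m 1 - u 1 m) - (u n 1 - u 1 n)) →
      (∀ m n : ℕ, 1 ≤ m → 1 ≤ n → u m 0 = u n 0) →
      FactorisedHomog u q (fun n => ∏ i ∈ Finset.range n, u 1 i)) := by
  refine ⟨⟨?_, fun h => ⟨_, suff q u hu h.1 h.2⟩⟩, suff q u hu⟩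
  rintro ⟨f, H⟩
  exact nec q hq hq1 u hu f H

end LRMP
end

section
/- Fix a function g : ℕ → ℝ_{>0}. There exists a rate function u such that the stationary distribution corresponding to u in the homogeneous PALRMP (for any fixed q ≥ 0, q ≠ 1) is NOT factorised, but the stationary distribution corresponding to u in the SLRMP and in the homogeneous SLRMP (q = 1) is factorised, with one-point functions f(x,n) = x^n·g(n) and f(n) = g(n), respectively. -/
open scoped Classical

namespace LRMP

noncomputable def rR (L : ℕ) (u : ℕ → ℕ → ℝ) (x : ZMod L → ℝ)
    (η : ZMod L → ℕ) (k ℓ : ZMod L) : ℝ :=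
  if k ≠ ℓ ∧ 1 ≤ η k ∧ RightClear L η k ℓ then x ℓ * u (η k) (η ℓ) else 0

noncomputable def rL (L : ℕ) (u : ℕ → ℕ → ℝ) (x : ZMod L → ℝ)
    (η : ZMod L → ℕ) (k ℓ : ZMod L) : ℝ :=
  if k ≠ ℓ ∧ 1 ≤ η k ∧ LeftClear L η k ℓ then x ℓ * u (η k) (η ℓ) else 0

lemma hopRate_eq (L : ℕ) (u : ℕ → ℕ → ℝ) (x : ZMod L → ℝ) (q : ℝ)
    (η : ZMod L → ℕ) (k ℓ : ZMod L) :
    hopRate L u x q η k ℓ = rR L u x η k ℓ + q * rL L u x η k ℓ := by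
  unfold hopRate rR rL
  simp only [mul_ite, mul_zero]

lemma key_idx (L : ℕ) [NeZero L] (k ℓ : ZMod L) (i : ℕ) (hi : 0 < i)
    (h : i < (ℓ - k).val) :
    k + (i : ZMod L) = ℓ - (((ℓ - k).val - i : ℕ) : ZMod L) ∧ k + (i : ZMod L) ≠ k ∧
      k + (i : ZMod L) ≠ ℓ := by
  have hd : (((ℓ - k).val : ℕ) : ZMod L) = ℓ - k := ZMod.natCast_zmod_val _
  have hL := ZMod.val_lt (ℓ - k)
  refine ⟨?_, ?_, ?_⟩
  · rw [Nat.cast_sub h.le, hd]; ring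
  · intro h0
    have : (i : ZMod L) = 0 := by simpa using h0
    rw [ZMod.natCast_eq_zero_iff] at this
    exact absurd (Nat.le_of_dvd hi this) (by omega)
  · intro h0
    have h1 : (i : ZMod L) = ℓ - k := by rw [← h0]; ring
    have h2 := congrArg ZMod.val h1
    rw [ZMod.val_natCast, Nat.mod_eq_of_lt (by omega)] at h2
    omega

lemma clear_RL (L : ℕ) [NeZero L] (η : ZMod L → ℕ) (k ℓ : ZMod L) :
    RightClear L (move L η ℓ k) k ℓ ↔ LeftClear L η ℓ k := by
  constructor
  · intro H i hi h
    obtain ⟨h1, h2, h3⟩ := key_idx L k ℓ ((ℓ - k).val - i) (by omega) (by omega)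
    have := H ((ℓ - k).val - i) (by omega) (by omega)
    unfold move at this
    rw [if_neg h3, if_neg h2, h1] at this
    rwa [Nat.sub_sub_self h.le] at this
  · intro H i hi h
    obtain ⟨h1, h2, h3⟩ := key_idx L k ℓ i hi h
    unfold move
    rw [if_neg h3, if_neg h2, h1]
    exact H _ (by omega) (by omega)

lemma move_move (L : ℕ) (η : ZMod L → ℕ) (k ℓ : ZMod L) (hk : k ≠ ℓ) (h : 1 ≤ η ℓ) :
    move L (move L η ℓ k) k ℓ = η := by
  funext a
  unfold move
  by_cases h1 : a = k
  · subst h1; simp [hk]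
  · by_cases h2 : a = ℓ
    · subst h2; simp [h1]; omega
    · simp [h1, h2]

lemma clear_LR (L : ℕ) [NeZero L] (η : ZMod L → ℕ) (k ℓ : ZMod L) (hk : k ≠ ℓ)
    (h : 1 ≤ η ℓ) :
    LeftClear L (move L η ℓ k) k ℓ ↔ RightClear L η ℓ k := by
  rw [← clear_RL L (move L η ℓ k) ℓ k, move_move L η k ℓ hk h]

lemma weight (L : ℕ) [NeZero L] (u : ℕ → ℕ → ℝ) (x : ZMod L → ℝ) (F : ZMod L → ℕ → ℝ)
    (H : ∀ k ℓ, k ≠ ℓ → ∀ m n, x ℓ * (F k (m+1) * F ℓ n * u (m+1) n) =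
      x k * (F k m * F ℓ (n+1) * u (n+1) m))
    (η : ZMod L → ℕ) (k ℓ : ZMod L) (hk : k ≠ ℓ) (h : 1 ≤ η ℓ) :
    (∏ a, F a (move L η ℓ k a)) * (x ℓ * u (move L η ℓ k k) (move L η ℓ k ℓ)) =
      (∏ a, F a (η a)) * (x k * u (η ℓ) (η k)) := by
  have e : ∀ G : ZMod L → ℝ, ∏ a, G a =
      G k * (G ℓ * ∏ a ∈ (Finset.univ.erase k).erase ℓ, G a) := by
    intro G
    rw [Finset.mul_prod_erase _ _ (by simp [hk.symm]), Finset.mul_prod_erase _ _ (by simp)]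
  rw [e, e]
  have e2 : ∏ a ∈ (Finset.univ.erase k).erase ℓ, F a (move L η ℓ k a) =
      ∏ a ∈ (Finset.univ.erase k).erase ℓ, F a (η a) := by
    apply Finset.prod_congr rfl
    intro a ha
    simp only [Finset.mem_erase, Finset.mem_univ, and_true] at ha
    simp [move, ha.1, ha.2]
  rw [e2]
  have m1 : move L η ℓ k k = η k + 1 := by simp [move, hk]
  have m2 : move L η ℓ k ℓ = η ℓ - 1 := by simp [move]
  rw [m1, m2]
  obtain ⟨n, hn⟩ : ∃ n, η ℓ = n + 1 := ⟨η ℓ - 1, by omega⟩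
  rw [hn, Nat.add_sub_cancel]
  linear_combination (∏ a ∈ (Finset.univ.erase k).erase ℓ, F a (η a)) * H k ℓ hk (η k) n

lemma main (L : ℕ) [NeZero L] (u : ℕ → ℕ → ℝ) (x : ZMod L → ℝ) (q : ℝ) (F : ZMod L → ℕ → ℝ)
    (H : ∀ k ℓ, k ≠ ℓ → ∀ m n, x ℓ * (F k (m+1) * F ℓ n * u (m+1) n) =
      x k * (F k m * F ℓ (n+1) * u (n+1) m))
    (η : ZMod L → ℕ) :
    inflow L u x q (fun η => ∏ a, F a (η a)) η =
      (∏ a, F a (η a)) * ((∑ k, ∑ ℓ, rL L u x η k ℓ) + q * ∑ k, ∑ ℓ, rR L u x η k ℓ) := by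
  unfold inflow
  rw [Finset.sum_comm]
  simp only [Finset.mul_sum, ← Finset.sum_add_distrib]
  refine Finset.sum_congr rfl fun ℓ _ => Finset.sum_congr rfl fun k _ => ?_
  by_cases h : 1 ≤ η ℓ
  · rw [if_pos h, hopRate_eq]
    by_cases hk : k = ℓ
    · subst hk; simp [rR, rL]
    · have w := weight L u x F H η k ℓ hk h
      have hk' : ¬ ℓ = k := fun h => hk h.symm
      have m1 : 1 ≤ move L η ℓ k k := by simp [move, hk]
      simp only [rR, rL, clear_RL, clear_LR L η k ℓ hk h, ne_eq, hk, hk', h, m1,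
        not_false_eq_true, true_and]
      split_ifs <;> first
        | linear_combination (1 + q) * w
        | linear_combination w
        | linear_combination q * w | simp
  · rw [if_neg h]
    simp [rR, rL, h]

lemma outflow_eq (L : ℕ) [NeZero L] (u : ℕ → ℕ → ℝ) (x : ZMod L → ℝ) (q : ℝ)
    (p : (ZMod L → ℕ) → ℝ) (η : ZMod L → ℕ) :
    outflow L u x q p η =
      p η * ((∑ k, ∑ ℓ, rR L u x η k ℓ) + q * ∑ k, ∑ ℓ, rL L u x η k ℓ) := by
  unfold outflow
  simp only [hopRate_eq, Finset.mul_sum, ← Finset.sum_add_distrib]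

lemma hop2 (u : ℕ → ℕ → ℝ) (hu : ∀ n, u 0 n = 0) (q : ℝ) (η : ZMod 2 → ℕ) (k ℓ : ZMod 2)
    (hk : k ≠ ℓ) :
    hopRate 2 u (fun _ => 1) q η k ℓ = (1 + q) * u (η k) (η ℓ) := by
  have hv : ∀ z : ZMod 2, z.val ≤ 1 := fun z => by have := ZMod.val_lt z; omega
  have c1 : RightClear 2 η k ℓ := fun i h1 h2 => by have := hv (ℓ - k); omega
  have c2 : LeftClear 2 η k ℓ := fun i h1 h2 => by have := hv (k - ℓ); omega
  by_cases h : 1 ≤ η k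
  · simp only [hopRate, ne_eq, hk, not_false_eq_true, h, c1, c2, and_self, if_true]; ring
  · have : η k = 0 := by omega
    simp [hopRate, this, hu]

lemma hop_self (L : ℕ) (u : ℕ → ℕ → ℝ) (x : ZMod L → ℝ) (q : ℝ) (η : ZMod L → ℕ) (k : ZMod L) :
    hopRate L u x q η k k = 0 := by simp [hopRate]

lemma sum2 (G : ZMod 2 → ℝ) : ∑ a, G a = G 0 + G 1 := Fin.sum_univ_two G
lemma prod2 (G : ZMod 2 → ℝ) : ∏ a, G a = G 0 * G 1 := Fin.prod_univ_two G
lemma sum3 (G : ZMod 3 → ℝ) : ∑ a, G a = G 0 + G 1 + G 2 := Fin.sum_univ_three G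

/-- the two-site configuration -/
def cfg2 (m n : ℕ) : ZMod 2 → ℕ := fun a => if a = 0 then m else n

lemma bal2 (u : ℕ → ℕ → ℝ) (hu : ∀ n, u 0 n = 0) (q : ℝ) (hq : 0 ≤ q) (f : ℕ → ℝ)
    (hf : FactorisedHomog u q f) (m n : ℕ) (hmn : 1 ≤ m + n) :
    (if 1 ≤ m then f (m - 1) * f (n + 1) * u (n + 1) (m - 1) else 0) +
    (if 1 ≤ n then f (m + 1) * f (n - 1) * u (m + 1) (n - 1) else 0) =
    f m * f n * (u m n + u n m) := by
  have h := hf.2 2 (m + n) le_rfl hmn (cfg2 m n)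
    (by rw [show (∑ a, cfg2 m n a) = cfg2 m n 0 + cfg2 m n 1 from Fin.sum_univ_two _]; simp [cfg2])
  have h01 : (0 : ZMod 2) ≠ 1 := by decide
  have h10 : (1 : ZMod 2) ≠ 0 := by decide
  simp only [inflow, outflow, sum2, prod2, hop_self, hop2 u hu q _ 0 1 h01,
    hop2 u hu q _ 1 0 h10] at h
  simp only [move, cfg2, h01, h10, if_true, if_false] at h
  have hq' : (1 + q) ≠ 0 := by positivity
  apply mul_left_cancel₀ hq'
  split_ifs at h ⊢ <;> linear_combination h

lemma db (u : ℕ → ℕ → ℝ) (hu : ∀ n, u 0 n = 0) (q : ℝ) (hq : 0 ≤ q) (f : ℕ → ℝ)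
    (hf : FactorisedHomog u q f) (m : ℕ) : ∀ n,
    f (m+1) * f n * u (m+1) n = f m * f (n+1) * u (n+1) m := by
  induction m with
  | zero =>
    intro n
    have := bal2 u hu q hq f hf 0 (n+1) (by omega)
    simp [hu] at this
    simpa using this
  | succ m ih =>
    intro n
    have := bal2 u hu q hq f hf (m+1) (n+1) (by omega)
    simp at this
    have := ih (n+1)
    linarith

/-- the three-site configuration -/
def cfg3 : ZMod 3 → ℕ := fun a => if a = 0 then 2 else if a = 1 then 1 else 0

lemma RC3 (η : ZMod 3 → ℕ) (k ℓ : ZMod 3) :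
    RightClear 3 η k ℓ ↔ ((ℓ - k).val = 2 → η (k + 1) = 0) := by
  have := ZMod.val_lt (ℓ - k)
  constructor
  · intro H h; simpa using H 1 (by omega) (by omega)
  · intro H i h1 h2
    have : i = 1 := by omega
    subst this
    simpa using H (by omega)

lemma LC3 (η : ZMod 3 → ℕ) (k ℓ : ZMod 3) :
    LeftClear 3 η k ℓ ↔ ((k - ℓ).val = 2 → η (k - 1) = 0) := by
  have := ZMod.val_lt (k - ℓ)
  constructor
  · intro H h; simpa using H 1 (by omega) (by omega)
  · intro H i h1 h2
    have : i = 1 := by omega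
    subst this
    simpa using H (by omega)

lemma sumR3 (u : ℕ → ℕ → ℝ) : ∑ k, ∑ ℓ, rR 3 u (fun _ => 1) cfg3 k ℓ =
    u 2 1 + u 1 0 + u 1 2 := by
  have e : ∀ k ℓ : ZMod 3, rR 3 u (fun _ => 1) cfg3 k ℓ =
      if k ≠ ℓ ∧ 1 ≤ cfg3 k ∧ ((ℓ - k).val = 2 → cfg3 (k + 1) = 0) then
        u (cfg3 k) (cfg3 ℓ) else 0 := by
    intro k ℓ; simp only [rR, RC3, one_mul]
  simp only [e, sum3]
  rw [if_neg (by decide), if_pos (by decide), if_neg (by decide), if_pos (by decide),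
    if_neg (by decide), if_pos (by decide), if_neg (by decide), if_neg (by decide),
    if_neg (by decide)]
  have c0 : cfg3 0 = 2 := by decide
  have c1 : cfg3 1 = 1 := by decide
  have c2 : cfg3 2 = 0 := by decide
  rw [c0, c1, c2]; ring

lemma sumL3 (u : ℕ → ℕ → ℝ) : ∑ k, ∑ ℓ, rL 3 u (fun _ => 1) cfg3 k ℓ =
    u 2 1 + u 2 0 + u 1 2 := by
  have e : ∀ k ℓ : ZMod 3, rL 3 u (fun _ => 1) cfg3 k ℓ =
      if k ≠ ℓ ∧ 1 ≤ cfg3 k ∧ ((k - ℓ).val = 2 → cfg3 (k - 1) = 0) then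
        u (cfg3 k) (cfg3 ℓ) else 0 := by
    intro k ℓ; simp only [rL, LC3, one_mul]
  simp only [e, sum3]
  rw [if_neg (by decide), if_pos (by decide), if_pos (by decide), if_pos (by decide),
    if_neg (by decide), if_neg (by decide), if_neg (by decide), if_neg (by decide),
    if_neg (by decide)]
  have c0 : cfg3 0 = 2 := by decide
  have c1 : cfg3 1 = 1 := by decide
  have c2 : cfg3 2 = 0 := by decide
  rw [c0, c1, c2]; ring

lemma not_fact (u : ℕ → ℕ → ℝ) (hu : ∀ n, u 0 n = 0) (hne : u 1 0 ≠ u 2 0)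
    (q : ℝ) (hq : 0 ≤ q) (hq1 : q ≠ 1) (f : ℕ → ℝ) (hf : FactorisedHomog u q f) : False := by
  have d := db u hu q hq f hf
  have h := hf.2 3 3 (by norm_num) (by norm_num) cfg3 (by decide)
  rw [main 3 u (fun _ => 1) q (fun _ => f) (fun k ℓ _ m n => by rw [d]) cfg3, outflow_eq,
    sumR3, sumL3] at h
  have hp : (∏ a, f (cfg3 a)) ≠ 0 := Finset.prod_ne_zero_iff.2 fun a _ => (hf.1 _).ne'
  have h' := mul_left_cancel₀ hp h
  have : (1 - q) * (u 1 0 - u 2 0) = 0 := by linear_combination -h'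
  rcases mul_eq_zero.1 this with h | h
  · exact hq1 (by linarith)
  · exact hne (by linarith)

/-- the rate function -/
noncomputable def rate (g : ℕ → ℝ) (m n : ℕ) : ℝ :=
  if m = 0 then 0 else
    (if m - 1 + n = 0 then 2 * g 1 / g 2 else 1) / (g m * g n)

lemma rate_db (g : ℕ → ℝ) (hg : ∀ n, 0 < g n) (m n : ℕ) :
    g (m+1) * g n * rate g (m+1) n = g m * g (n+1) * rate g (n+1) m := by
  have := fun n => (hg n).ne'
  simp only [rate, Nat.add_sub_cancel, Nat.succ_ne_zero, if_false, Nat.add_comm n m]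
  rw [mul_div_cancel₀ _ (mul_ne_zero (this _) (this _)), mul_comm (g m),
    mul_div_cancel₀ _ (mul_ne_zero (this _) (this _))]

theorem exists_rate_slrmp_not_homog
    (g : ℕ → ℝ) (hg : ∀ n, 0 < g n) :
    ∃ u : ℕ → ℕ → ℝ, IsRate u ∧
      (∀ q : ℝ, 0 ≤ q → q ≠ 1 → ¬ ∃ f : ℕ → ℝ, FactorisedHomog u q f) ∧
      FactorisedPALRMP u 1 (fun x n => x ^ n * g n) ∧
      FactorisedHomog u 1 g := by
  have hu0 : ∀ n, rate g 0 n = 0 := fun n => by simp [rate]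
  refine ⟨rate g, ⟨?_, hu0⟩, ?_, ⟨?_, ?_⟩, hg, ?_⟩
  · intro m n hm
    have h1 := hg 1
    have h2 := hg 2
    have h3 := hg m
    have h4 := hg n
    unfold rate
    rw [if_neg (by omega)]
    split_ifs <;> positivity
  · rintro q hq hq1 ⟨f, hf⟩
    refine not_fact (rate g) hu0 ?_ q hq hq1 f hf
    have h1 := (hg 1).ne'
    have h2 := (hg 2).ne'
    have h0 := (hg 0).ne'
    simp only [rate]
    norm_num
    intro h
    field_simp at h
    norm_num at h
  · intro x n hx
    have := hg n
    positivity
  · intro L N _ _ _ x hx η _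
    rw [main L (rate g) x 1 (fun a n => x a ^ n * g n) ?_ η, outflow_eq]
    · ring
    · intro k ℓ _ m n
      simp only [pow_succ]
      linear_combination (x k ^ m * x k * x ℓ ^ n * x ℓ) * rate_db g hg m n
  · intro L N _ _ _ η _
    rw [main L (rate g) (fun _ => 1) 1 (fun _ => g) ?_ η, outflow_eq]
    · ring
    · intro k ℓ _ m n
      rw [rate_db g hg]

end LRMP
end
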